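/- Let n ≥ 1 be a natural number, let ê₁, …, ê_n ∈ (0,1] and D₁, …, D_n ∈ {0,1} with ∑ᵢ Dᵢ/êᵢ > 0 (equivalently, at least one Dᵢ = 1). For b ∈ [0,1] define S(b) = (1/n)·∑ᵢ Dᵢ/max(êᵢ, b)² and f(b) = b·( (1/n)·∑ᵢ 1{êᵢ ≤ b} )/√S(b) + b²·√S(b) − n^(−1/2). Then there is exactly one b* ∈ [0,1] such that the left-hand limit superior of f at b* (along b → b* with b < b*, b ∈ [0,1]) is ≤ 0 and the right-hand limit inferior of f at b* (along b → b* with b > b*, b ∈ [0,1]) is ≥ 0, where a one-sided limit along an empty approach set makes the corresponding inequality hold vacuously. -/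

import Mathlib

/-!
On `[0, 1]` the criterion `f` is strictly increasing. Indeed `S(b) = (1/n) ∑ Dᵢ / max(êᵢ, b)²` is
positive and nonincreasing, so the first term of `f` is nondecreasing, while the second term is the
square root of `(1/n) ∑ Dᵢ (b² / max(êᵢ, b))²`, in which every summand with `Dᵢ = 1` is strictly
increasing (`errorBoundDiff_strictMonoOn`).

A strictly increasing function on `[0, 1]` that is nonpositive at `0` has exactly one crossing point
in the one-sided sense (`existsUnique_crossing`): the supremum of `{b | f b ≤ 0}` is one, and
between two crossing points `f` would be both positive and nonpositive.
-/

open Filter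

/-- The empirical error-bound criterion `f` of the rule of thumb for the clipping
threshold (no specified nuisance rate upper bounds). -/
noncomputable def errorBoundDiff (n : ℕ) (ehat D : Fin n → ℝ) (b : ℝ) : ℝ :=
  b * ((1 / (n : ℝ)) * ∑ i, (if ehat i ≤ b then (1 : ℝ) else 0))
      / Real.sqrt ((1 / (n : ℝ)) * ∑ i, D i / (max (ehat i) b) ^ 2)
    + b ^ 2 * Real.sqrt ((1 / (n : ℝ)) * ∑ i, D i / (max (ehat i) b) ^ 2)
    - 1 / Real.sqrt (n : ℝ)

/-- Over an empty approach filter the real `limsup` is `sInf univ = 0`, so the bound needs no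
nontriviality of the filter; over a nontrivial one the lower bound `m` excludes junk values. -/
lemma limsup_nonpos_of_eventually {F : Filter ℝ} {f : ℝ → ℝ} {m : ℝ}
    (hm : ∀ᶠ x in F, m ≤ f x) (h : ∀ᶠ x in F, f x ≤ 0) : limsup f F ≤ 0 := by
  rcases F.eq_or_neBot with rfl | hF
  · simp [limsup_eq]
  · exact limsup_le_of_le (isBoundedUnder_of_eventually_ge hm).isCoboundedUnder_le h

/-- Counterpart of `limsup_nonpos_of_eventually` for the lower limit. -/
lemma liminf_nonneg_of_eventually {F : Filter ℝ} {f : ℝ → ℝ} {M : ℝ}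
    (hM : ∀ᶠ x in F, f x ≤ M) (h : ∀ᶠ x in F, 0 ≤ f x) : 0 ≤ liminf f F := by
  rcases F.eq_or_neBot with rfl | hF
  · simp [liminf_eq]
  · exact le_liminf_of_le (isBoundedUnder_of_eventually_le hM).isCoboundedUnder_ge h

lemma nonpos_of_lt_of_limsup_nonpos {f : ℝ → ℝ} (hf : StrictMonoOn f (Set.Icc 0 1)) {b c : ℝ}
    (hb : b ∈ Set.Icc (0 : ℝ) 1) (hc : 0 ≤ c) (hcb : c < b)
    (h : limsup f (nhdsWithin b (Set.Icc 0 1 ∩ Set.Iio b)) ≤ 0) : f c ≤ 0 := by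
  have hev : ∀ᶠ x in nhdsWithin b (Set.Icc (0 : ℝ) 1 ∩ Set.Iio b), x ∈ Set.Icc (0 : ℝ) 1 :=
    eventually_mem_nhdsWithin.mono fun x hx => hx.1
  have hgt : ∀ᶠ x in nhdsWithin b (Set.Icc (0 : ℝ) 1 ∩ Set.Iio b), c < x :=
    eventually_nhdsWithin_of_eventually_nhds (lt_mem_nhds hcb)
  have hne : (nhdsWithin b (Set.Icc (0 : ℝ) 1 ∩ Set.Iio b)).NeBot := by
    have : (nhdsWithin b (Set.Ioo c b)).NeBot := right_nhdsWithin_Ioo_neBot hcb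
    refine this.mono (nhdsWithin_mono _ fun x hx => ?_)
    exact ⟨⟨hc.trans hx.1.le, hx.2.le.trans hb.2⟩, hx.2⟩
  refine le_trans ?_ h
  refine le_limsup_of_frequently_le ?_ ?_
  · refine Eventually.frequently ?_
    filter_upwards [hev, hgt] with x hx hcx
    exact hf.monotoneOn ⟨hc, hcb.le.trans hb.2⟩ hx hcx.le
  · refine isBoundedUnder_of_eventually_le (a := f 1) ?_
    filter_upwards [hev] with x hx
    exact hf.monotoneOn hx (by simp) hx.2

lemma nonneg_of_lt_of_liminf_nonneg {f : ℝ → ℝ} (hf : StrictMonoOn f (Set.Icc 0 1)) {b c : ℝ}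
    (hb : b ∈ Set.Icc (0 : ℝ) 1) (hc : c ≤ 1) (hbc : b < c)
    (h : 0 ≤ liminf f (nhdsWithin b (Set.Icc 0 1 ∩ Set.Ioi b))) : 0 ≤ f c := by
  have hev : ∀ᶠ x in nhdsWithin b (Set.Icc (0 : ℝ) 1 ∩ Set.Ioi b), x ∈ Set.Icc (0 : ℝ) 1 :=
    eventually_mem_nhdsWithin.mono fun x hx => hx.1
  have hlt : ∀ᶠ x in nhdsWithin b (Set.Icc (0 : ℝ) 1 ∩ Set.Ioi b), x < c :=
    eventually_nhdsWithin_of_eventually_nhds (gt_mem_nhds hbc)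
  have hne : (nhdsWithin b (Set.Icc (0 : ℝ) 1 ∩ Set.Ioi b)).NeBot := by
    have : (nhdsWithin b (Set.Ioo b c)).NeBot := left_nhdsWithin_Ioo_neBot hbc
    refine this.mono (nhdsWithin_mono _ fun x hx => ?_)
    exact ⟨⟨hb.1.trans hx.1.le, hx.2.le.trans hc⟩, hx.1⟩
  refine le_trans h ?_
  refine liminf_le_of_frequently_le ?_ ?_
  · refine Eventually.frequently ?_
    filter_upwards [hev, hlt] with x hx hxc
    exact hf.monotoneOn hx ⟨hb.1.trans hbc.le, hc⟩ hxc.le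
  · refine isBoundedUnder_of_eventually_ge (a := f 0) ?_
    filter_upwards [hev] with x hx
    exact hf.monotoneOn (by simp) hx hx.1

/-- A strictly increasing function on `[0, 1]`, not assumed continuous, has exactly one point where
it passes from nonpositive to nonnegative values in the sense of one-sided limits. -/
lemma existsUnique_crossing {f : ℝ → ℝ} (hf : StrictMonoOn f (Set.Icc 0 1)) (h0 : f 0 ≤ 0) :
    ∃! b : ℝ, b ∈ Set.Icc (0 : ℝ) 1 ∧
      limsup f (nhdsWithin b (Set.Icc 0 1 ∩ Set.Iio b)) ≤ 0 ∧
      0 ≤ liminf f (nhdsWithin b (Set.Icc 0 1 ∩ Set.Ioi b)) := by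
  refine existsUnique_of_exists_of_unique ?_ ?_
  · set A : Set ℝ := {x | x ∈ Set.Icc (0 : ℝ) 1 ∧ f x ≤ 0} with hA
    have hA0 : (0 : ℝ) ∈ A := ⟨by simp, h0⟩
    have hbdd : BddAbove A := ⟨1, fun x hx => hx.1.2⟩
    refine ⟨sSup A, ⟨le_csSup hbdd hA0, csSup_le ⟨0, hA0⟩ fun x hx => hx.1.2⟩, ?_, ?_⟩
    · refine limsup_nonpos_of_eventually (m := f 0) ?_ ?_
      · filter_upwards [eventually_mem_nhdsWithin] with x hx
        exact hf.monotoneOn (by simp) hx.1 hx.1.1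
      · filter_upwards [eventually_mem_nhdsWithin] with x hx
        obtain ⟨a, ha, hxa⟩ := exists_lt_of_lt_csSup ⟨0, hA0⟩ hx.2
        exact (hf.monotoneOn hx.1 ha.1 hxa.le).trans ha.2
    · refine liminf_nonneg_of_eventually (M := f 1) ?_ ?_
      · filter_upwards [eventually_mem_nhdsWithin] with x hx
        exact hf.monotoneOn hx.1 (by simp) hx.1.2
      · filter_upwards [eventually_mem_nhdsWithin] with x hx
        by_contra! hneg
        exact (le_csSup hbdd (show x ∈ A from ⟨hx.1, hneg.le⟩)).not_gt hx.2
  · have key : ∀ b₁ b₂ : ℝ, b₁ ∈ Set.Icc (0 : ℝ) 1 → b₂ ∈ Set.Icc (0 : ℝ) 1 →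
        0 ≤ liminf f (nhdsWithin b₁ (Set.Icc 0 1 ∩ Set.Ioi b₁)) →
        limsup f (nhdsWithin b₂ (Set.Icc 0 1 ∩ Set.Iio b₂)) ≤ 0 → b₂ ≤ b₁ := by
      intro b₁ b₂ h₁ h₂ hinf hsup
      by_contra! hlt
      obtain ⟨c, hc₁, hc₂⟩ := exists_between hlt
      obtain ⟨d, hd₁, hd₂⟩ := exists_between hc₂
      have hc : 0 ≤ f c := nonneg_of_lt_of_liminf_nonneg hf h₁ (hc₂.le.trans h₂.2) hc₁ hinf
      have hd : f d ≤ 0 :=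
        nonpos_of_lt_of_limsup_nonpos hf h₂ (h₁.1.trans (hc₁.trans hd₁).le) hd₂ hsup
      have hcd : f c < f d := hf ⟨h₁.1.trans hc₁.le, hc₂.le.trans h₂.2⟩
        ⟨h₁.1.trans (hc₁.trans hd₁).le, hd₂.le.trans h₂.2⟩ hd₁
      linarith
    rintro b₁ b₂ ⟨h₁, hs₁, hi₁⟩ ⟨h₂, hs₂, hi₂⟩
    exact le_antisymm (key b₂ b₁ h₂ h₁ hi₂ hs₁) (key b₁ b₂ h₁ h₂ hi₁ hs₂)

/-- For `e > 0` the map `b ↦ b² / max e b` is strictly increasing on `[0, ∞)`: it is `b² / e` up to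
`b = e` and `b` afterwards. -/
lemma sq_div_max_lt {e a b : ℝ} (he : 0 < e) (ha : 0 ≤ a) (hab : a < b) :
    a ^ 2 / max e a < b ^ 2 / max e b := by
  have hb : 0 < b := ha.trans_lt hab
  rw [div_lt_div_iff₀ (lt_max_of_lt_left he) (lt_max_of_lt_left he)]
  rcases le_total e a with h | h
  · rw [max_eq_right h, max_eq_right (h.trans hab.le)]
    have := mul_pos (mul_pos (he.trans_le h) hb) (sub_pos.2 hab)
    nlinarith
  · rw [max_eq_left h]
    rcases le_total e b with h' | h'
    · rw [max_eq_right h']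
      nlinarith [mul_le_mul_of_nonneg_left h ha, mul_pos hb (mul_pos he (sub_pos.2 hab)),
        mul_nonneg (mul_nonneg ha hb.le) (sub_nonneg.2 h)]
    · rw [max_eq_left h']
      exact mul_lt_mul_of_pos_right (pow_lt_pow_left₀ hab ha two_ne_zero) he

lemma errorBoundDiff_strictMonoOn {n : ℕ} {ehat D : Fin n → ℝ}
    (hehat : ∀ i, ehat i ∈ Set.Ioc (0 : ℝ) 1) (hD : ∀ i, D i = 0 ∨ D i = 1)
    (hpos : 0 < ∑ i, D i / ehat i) :
    StrictMonoOn (errorBoundDiff n ehat D) (Set.Icc 0 1) := by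
  have hD0 : ∀ i, 0 ≤ D i := fun i => by rcases hD i with h | h <;> simp [h]
  obtain ⟨j, -, hj⟩ : ∃ j ∈ Finset.univ, 0 < D j / ehat j := by
    by_contra! h
    exact hpos.not_ge (Finset.sum_nonpos h)
  have hDj : 0 < D j := by
    rcases hD j with h | h
    · simp [h] at hj
    · simp [h]
  have hn : 0 < 1 / (n : ℝ) := by
    have : 0 < n := j.pos
    positivity
  have hmax : ∀ i b, 0 < max (ehat i) b := fun i b => lt_max_of_lt_left (hehat i).1
  have hSpos : ∀ b, 0 < (1 / (n : ℝ)) * ∑ i, D i / (max (ehat i) b) ^ 2 := by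
    intro b
    refine mul_pos hn (Finset.sum_pos' (fun i _ => div_nonneg (hD0 i) (sq_nonneg _)) ?_)
    exact ⟨j, Finset.mem_univ j, div_pos hDj (pow_pos (hmax j b) 2)⟩
  -- Moving `b²` under the square root turns the second term into a sum of increasing summands.
  have hsecond : ∀ b : ℝ, b ^ 2 * Real.sqrt ((1 / (n : ℝ)) * ∑ i, D i / (max (ehat i) b) ^ 2)
      = Real.sqrt ((1 / (n : ℝ)) * ∑ i, D i * (b ^ 2 / max (ehat i) b) ^ 2) := by
    intro b
    have : (1 / (n : ℝ)) * ∑ i, D i * (b ^ 2 / max (ehat i) b) ^ 2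
        = (b ^ 2) ^ 2 * ((1 / (n : ℝ)) * ∑ i, D i / (max (ehat i) b) ^ 2) := by
      rw [mul_left_comm, Finset.mul_sum (a := (b ^ 2) ^ 2)]
      congr 1
      refine Finset.sum_congr rfl fun i _ => ?_
      rw [div_pow]
      ring
    rw [this, Real.sqrt_mul (sq_nonneg _), Real.sqrt_sq (sq_nonneg _)]
  intro a ha b hb hab
  have hterm : ∀ i, (a ^ 2 / max (ehat i) a) ^ 2 < (b ^ 2 / max (ehat i) b) ^ 2 := fun i =>
    pow_lt_pow_left₀ (sq_div_max_lt (hehat i).1 ha.1 hab)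
      (div_nonneg (sq_nonneg _) (hmax i a).le) two_ne_zero
  have h2 : Real.sqrt ((1 / (n : ℝ)) * ∑ i, D i * (a ^ 2 / max (ehat i) a) ^ 2)
      < Real.sqrt ((1 / (n : ℝ)) * ∑ i, D i * (b ^ 2 / max (ehat i) b) ^ 2) := by
    refine Real.sqrt_lt_sqrt (mul_nonneg hn.le
      (Finset.sum_nonneg fun i _ => mul_nonneg (hD0 i) (sq_nonneg _))) ?_
    refine mul_lt_mul_of_pos_left ?_ hn
    refine Finset.sum_lt_sum (fun i _ => mul_le_mul_of_nonneg_left (hterm i).le (hD0 i)) ?_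
    exact ⟨j, Finset.mem_univ j, mul_lt_mul_of_pos_left (hterm j) hDj⟩
  have hS : Real.sqrt ((1 / (n : ℝ)) * ∑ i, D i / (max (ehat i) b) ^ 2)
      ≤ Real.sqrt ((1 / (n : ℝ)) * ∑ i, D i / (max (ehat i) a) ^ 2) := by
    refine Real.sqrt_le_sqrt (mul_le_mul_of_nonneg_left ?_ hn.le)
    refine Finset.sum_le_sum fun i _ => ?_
    exact div_le_div_of_nonneg_left (hD0 i) (pow_pos (hmax i a) 2)
      (pow_le_pow_left₀ (hmax i a).le (max_le_max le_rfl hab.le) 2)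
  have hcount : (1 / (n : ℝ)) * ∑ i, (if ehat i ≤ a then (1 : ℝ) else 0)
      ≤ (1 / (n : ℝ)) * ∑ i, (if ehat i ≤ b then (1 : ℝ) else 0) := by
    refine mul_le_mul_of_nonneg_left (Finset.sum_le_sum fun i _ => ?_) hn.le
    split_ifs with h h'
    · exact le_rfl
    · exact absurd (h.trans hab.le) h'
    · exact zero_le_one
    · exact le_rfl
  have hcount0 : ∀ c : ℝ, 0 ≤ (1 / (n : ℝ)) * ∑ i, (if ehat i ≤ c then (1 : ℝ) else 0) :=
    fun c => mul_nonneg hn.le (Finset.sum_nonneg fun i _ => by split_ifs <;> simp)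
  have h1 := div_le_div₀ (mul_nonneg hb.1 (hcount0 b))
    (mul_le_mul hab.le hcount (hcount0 a) hb.1) (Real.sqrt_pos.2 (hSpos b)) hS
  unfold errorBoundDiff
  rw [hsecond a, hsecond b]
  linarith

/-- the rule-of-thumb threshold is well defined: there is exactly one
`b ∈ [0,1]` at which the left-hand limit superior of `f` is `≤ 0` and the right-hand
limit inferior of `f` is `≥ 0` (one-sided limits taken within `[0,1]`; along an empty
approach filter the corresponding inequality holds vacuously). -/
theorem stmt18 (n : ℕ) (hn : 1 ≤ n) (ehat D : Fin n → ℝ)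
    (hehat : ∀ i, ehat i ∈ Set.Ioc (0 : ℝ) 1)
    (hD : ∀ i, D i = 0 ∨ D i = 1)
    (hpos : 0 < ∑ i, D i / ehat i) :
    ∃! b : ℝ, b ∈ Set.Icc (0 : ℝ) 1 ∧
      limsup (errorBoundDiff n ehat D) (nhdsWithin b (Set.Icc 0 1 ∩ Set.Iio b)) ≤ 0 ∧
      0 ≤ liminf (errorBoundDiff n ehat D) (nhdsWithin b (Set.Icc 0 1 ∩ Set.Ioi b)) := by
  refine existsUnique_crossing (errorBoundDiff_strictMonoOn hehat hD hpos) ?_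
  simp [errorBoundDiff]
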